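/- arXiv:1605.04065 — 2 statements merged into one kernel-verified Lean document; each statement's English description precedes it below -/
import Mathlib

section
/- Every finite normal subgroup F of G is contained in A_μ: for each f ∈ F, lim_{n→∞} μ^{*n}(f)/μ^{*n}(e) = 1. -/
open Filter Topology
open scoped Classical

/-- Convolution of two real-valued functions on a discrete group. -/
noncomputable def conv {G : Type*} [Group G] (μ τ : G → ℝ) : G → ℝ :=
  fun y => ∑' x : G, μ x * τ (x⁻¹ * y)

/-- `n`-fold convolution power, with `μ^{*0}` the Dirac mass at the identity. -/
noncomputable def convPow {G : Type*} [Group G] (μ : G → ℝ) : ℕ → G → ℝ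
  | 0 => fun x => if x = 1 then 1 else 0
  | n + 1 => conv (convPow μ n) μ

/-- `μ` is a probability measure on the discrete group `G`. -/
def IsProb {G : Type*} [Group G] (μ : G → ℝ) : Prop :=
  (∀ x, 0 ≤ μ x) ∧ ∑' x : G, μ x = 1

/-- `μ` is symmetric. -/
def MeasSymm {G : Type*} [Group G] (μ : G → ℝ) : Prop := ∀ x, μ x⁻¹ = μ x

/-- `μ` is aperiodic: `gcd { n ≥ 1 | μ^{*n}(e) > 0 } = 1`. -/
def IsAperiodic {G : Type*} [Group G] (μ : G → ℝ) : Prop :=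
  ∀ d : ℕ, (∀ n : ℕ, 1 ≤ n → 0 < convPow μ n 1 → d ∣ n) → d = 1

/-- The support of `μ` generates `G`. -/
def GeneratingSupport {G : Type*} [Group G] (μ : G → ℝ) : Prop :=
  Subgroup.closure {x : G | 0 < μ x} = ⊤

/-- The set `A_μ = { g | μ^{*n}(g)/μ^{*n}(e) → 1 }`. -/
def Amu {G : Type*} [Group G] (μ : G → ℝ) : Set G :=
  {g | Tendsto (fun n => convPow μ n g / convPow μ n 1) atTop (𝓝 1)}

/-- ℓ² inner product. -/
noncomputable def l2inner {G : Type*} (f h : G → ℝ) : ℝ := ∑' x : G, f x * h x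

/-- ℓ² norm. -/
noncomputable def l2norm {G : Type*} (f : G → ℝ) : ℝ :=
  Real.sqrt (∑' x : G, (f x) ^ 2)

/-- Left translation: `(g · f)(x) = f (g⁻¹ x)`. -/
def ltrans {G : Type*} [Group G] (g : G) (f : G → ℝ) : G → ℝ := fun x => f (g⁻¹ * x)

/-- The normalized convolution powers `ξ_n = μ^{*n}/‖μ^{*n}‖₂`. -/
noncomputable def xi {G : Type*} [Group G] (μ : G → ℝ) (n : ℕ) : G → ℝ :=
  fun x => convPow μ n x / l2norm (convPow μ n)

/-- Reiter-type characterization of amenability: a sequence of almost-invariant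
unit vectors in `ℓ²(K)`. -/
def ReiterAmenable (K : Type*) [Group K] : Prop :=
  ∃ ψ : ℕ → K → ℝ, (∀ n, ∑' x : K, (ψ n x) ^ 2 = 1) ∧
    ∀ k : K, Tendsto
      (fun n => Real.sqrt (∑' x : K, (ψ n (k⁻¹ * x) - ψ n x) ^ 2)) atTop (𝓝 0)

open scoped ENNReal

/-- Extended nonnegative functions on a group, with convolution as product. -/
def EF (G : Type*) := G → ℝ≥0∞

namespace EF

set_option linter.unusedSectionVars false

variable {G : Type*} [Group G]

noncomputable instance : AddCommMonoid (EF G) := inferInstanceAs (AddCommMonoid (G → ℝ≥0∞))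

noncomputable instance : Mul (EF G) := ⟨fun a b y => ∑' x : G, a x * b (x⁻¹ * y)⟩

noncomputable instance : One (EF G) := ⟨fun x => if x = 1 then 1 else 0⟩

theorem mul_apply (a b : EF G) (y : G) : (a * b) y = ∑' x : G, a x * b (x⁻¹ * y) := rfl

theorem one_apply (x : G) : (1 : EF G) x = if x = 1 then 1 else 0 := rfl

theorem add_apply (a b : EF G) (y : G) : (a + b) y = a y + b y := rfl

theorem zero_apply (y : G) : (0 : EF G) y = 0 := rfl

theorem ext' {a b : EF G} (h : ∀ x, a x = b x) : a = b := funext h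

theorem tsum_left (g : G) (a : G → ℝ≥0∞) : ∑' x, a (g * x) = ∑' x, a x :=
  (Equiv.mulLeft g).tsum_eq a

theorem tsum_right (g : G) (a : G → ℝ≥0∞) : ∑' x, a (x * g) = ∑' x, a x :=
  (Equiv.mulRight g).tsum_eq a

theorem tsum_inv' (a : G → ℝ≥0∞) : ∑' x, a (x⁻¹) = ∑' x, a x :=
  (Equiv.inv G).tsum_eq a

theorem mul_assoc' (a b c : EF G) : a * b * c = a * (b * c) := by
  apply ext'
  intro y
  simp only [mul_apply, ← ENNReal.tsum_mul_left, ← ENNReal.tsum_mul_right]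
  rw [ENNReal.tsum_comm]
  refine tsum_congr fun x => ?_
  rw [← tsum_left x]
  refine tsum_congr fun z => ?_
  simp [mul_assoc]

theorem one_mul' (a : EF G) : 1 * a = a := by
  apply ext'
  intro y
  rw [mul_apply, tsum_eq_single 1]
  · simp [one_apply]
  · intro b hb
    simp [one_apply, hb]

theorem mul_one' (a : EF G) : a * 1 = a := by
  apply ext'
  intro y
  rw [mul_apply, tsum_eq_single y]
  · simp [one_apply]
  · intro b hb
    have : b⁻¹ * y ≠ 1 := by
      intro h
      exact hb (inv_mul_eq_one.mp h)
    simp [one_apply, this]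

noncomputable instance : Semiring (EF G) where
  left_distrib a b c := by
    apply ext'
    intro y
    simp only [mul_apply, add_apply, mul_add, ENNReal.tsum_add]
  right_distrib a b c := by
    apply ext'
    intro y
    simp only [mul_apply, add_apply, add_mul, ENNReal.tsum_add]
  zero_mul a := by
    apply ext'
    intro y
    simp [mul_apply, zero_apply]
  mul_zero a := by
    apply ext'
    intro y
    simp [mul_apply, zero_apply]
  mul_assoc := mul_assoc'
  one_mul := one_mul'
  mul_one := mul_one'
  nsmul := nsmulRec

/-- total mass -/
noncomputable def mass (a : EF G) : ℝ≥0∞ := ∑' x : G, a x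

theorem mass_mul (a b : EF G) : mass (a * b) = mass a * mass b := by
  have h1 : mass (a * b) = ∑' y : G, ∑' x : G, a x * b (x⁻¹ * y) := rfl
  have h2 : mass a * mass b = ∑' x : G, a x * mass b :=
    (ENNReal.tsum_mul_right (f := fun x : G => a x) (a := mass b)).symm
  rw [h1, h2, ENNReal.tsum_comm]
  refine tsum_congr fun x => ?_
  rw [ENNReal.tsum_mul_left]
  exact congrArg _ (tsum_left x⁻¹ b)

theorem mass_one : mass (1 : EF G) = 1 := by
  simp only [mass, one_apply]
  rw [tsum_eq_single 1]
  · simp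
  · intro b hb
    simp [hb]

theorem mass_pow (a : EF G) (n : ℕ) : mass (a ^ n) = mass a ^ n := by
  induction n with
  | zero => simp [mass_one]
  | succ n ih => rw [pow_succ, pow_succ, mass_mul, ih]

theorem le_mass (a : EF G) (x : G) : a x ≤ mass a := ENNReal.le_tsum x

theorem mul_le_mul'' {a b c d : EF G} (h : ∀ x, a x ≤ b x) (h' : ∀ x, c x ≤ d x) (y : G) :
    (a * c) y ≤ (b * d) y :=
  ENNReal.tsum_le_tsum fun x => mul_le_mul' (h x) (h' _)

theorem le_mul (a b : EF G) (x y : G) : a x * b y ≤ (a * b) (x * y) := by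
  have := ENNReal.le_tsum (f := fun z => a z * b (z⁻¹ * (x * y))) x
  simp only [inv_mul_cancel_left] at this
  exact this

theorem mul_le_mass (a b : EF G) (C : ℝ≥0∞) (h : ∀ x, b x ≤ C) (y : G) :
    (a * b) y ≤ mass a * C := by
  have h2 : mass a * C = ∑' x : G, a x * C :=
    (ENNReal.tsum_mul_right (f := fun x : G => a x) (a := C)).symm
  rw [mul_apply, h2]
  exact ENNReal.tsum_le_tsum fun x => mul_le_mul' le_rfl (h _)

def Sym (a : EF G) : Prop := ∀ x, a x⁻¹ = a x

theorem mul_inv_apply {a b : EF G} (ha : Sym a) (hb : Sym b) (y : G) :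
    (a * b) y⁻¹ = (b * a) y := by
  rw [mul_apply, mul_apply, ← tsum_left y⁻¹, ← tsum_inv' (fun x => b x * a (x⁻¹ * y))]
  rw [← tsum_inv']
  refine tsum_congr fun x => ?_
  rw [mul_comm, ← ha]
  have := hb (x⁻¹)
  simp at this
  simp [this]

theorem sym_pow {a : EF G} (ha : Sym a) (n : ℕ) : Sym (a ^ n) := by
  induction n with
  | zero => intro x; simp [one_apply]
  | succ n ih =>
    intro x
    rw [pow_succ, mul_inv_apply ih ha, ← pow_succ', pow_succ]

theorem two_mul_le' (a b : ℝ≥0∞) : 2 * (a * b) ≤ a * a + b * b := by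
  by_cases ha : a = ⊤
  · simp [ha]
  by_cases hb : b = ⊤
  · simp [hb]
  lift a to NNReal using ha
  lift b to NNReal using hb
  have := two_mul_le_add_sq a b
  rw [sq, sq, mul_assoc] at this
  exact_mod_cast this

theorem sq_apply_le {a : EF G} (ha : Sym a) (g : G) : (a * a) g ≤ (a * a) 1 := by
  have h2 : 2 * (a * a) g ≤ 2 * (a * a) 1 := by
    have e1 : (a * a) 1 = ∑' x, a x * a x := by
      rw [mul_apply]
      refine tsum_congr fun x => ?_
      rw [mul_one, ha]
    have e2 : (a * a) 1 = ∑' x, a (x⁻¹ * g) * a (x⁻¹ * g) := by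
      rw [e1, tsum_inv' (fun x => a (x * g) * a (x * g)), tsum_right g (fun x => a x * a x)]
    rw [two_mul ((a * a) 1)]
    nth_rw 2 [e2]
    rw [e1, ← ENNReal.tsum_add, mul_apply, ← ENNReal.tsum_mul_left]
    refine ENNReal.tsum_le_tsum fun x => ?_
    exact two_mul_le' (a x) (a (x⁻¹ * g))
  exact (ENNReal.mul_le_mul_iff_right (by norm_num) (by norm_num)).1 h2

/-- right `F`-invariance -/
def Inv (F : Subgroup G) (a : EF G) : Prop := ∀ x, ∀ f ∈ F, a (x * f) = a x

theorem Inv.mul_left {F : Subgroup G} {a : EF G} (b : EF G) (h : Inv F a) : Inv F (b * a) := by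
  intro x f hf
  rw [mul_apply, mul_apply]
  refine tsum_congr fun z => ?_
  rw [← mul_assoc, h _ f hf]

theorem Inv.mul_right {F : Subgroup G} (hF : F.Normal) {a : EF G} (b : EF G) (h : Inv F a) :
    Inv F (a * b) := by
  intro x f hf
  rw [mul_apply, mul_apply, ← tsum_left (x * f * x⁻¹)]
  refine tsum_congr fun z => ?_
  have e : x * f * x⁻¹ * z = z * (z⁻¹ * (x * f * x⁻¹) * z) := by group
  have m : z⁻¹ * (x * f * x⁻¹) * z ∈ F := by
    simpa using hF.conj_mem _ (hF.conj_mem f hf x) z⁻¹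
  congr 1
  · rw [e, h _ _ m]
  · congr 1
    group

theorem Inv.add {F : Subgroup G} {a b : EF G} (h : Inv F a) (h' : Inv F b) : Inv F (a + b) := by
  intro x f hf
  rw [add_apply, add_apply, h x f hf, h' x f hf]

theorem pow_decomp {F : Subgroup G} (hF : F.Normal) {t w : EF G} (hw : Inv F w) (n : ℕ) :
    ∃ W : EF G, Inv F W ∧ (t + w) ^ n = t ^ n + W := by
  induction n with
  | zero => exact ⟨0, fun x f _ => rfl, by simp⟩
  | succ n ih =>
    obtain ⟨W, hW, e⟩ := ih
    refine ⟨t ^ n * w + W * (t + w), (hw.mul_left _).add (hW.mul_right hF _), ?_⟩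
    rw [pow_succ, e, pow_succ, add_mul, mul_add, add_assoc]

theorem pow_lower {t w : EF G} (b : ℝ≥0∞) (hb : b ≤ w 1) (n : ℕ) (y : G) :
    (n + 1 : ℕ) * b * (t ^ n) y + (t ^ (n + 1)) y ≤ ((t + w) ^ (n + 1)) y := by
  -- right multiplication by `w` dominates multiplication by `b`
  have hwb : ∀ (s : EF G) (z : G), b * s z ≤ (s * w) z := by
    intro s z
    have := le_mul s w z 1
    rw [mul_one] at this
    rw [mul_comm]
    exact (mul_le_mul' le_rfl hb).trans this
  induction n generalizing y with
  | zero =>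
    have := hwb 1 y
    simp only [one_mul] at this
    simp only [zero_add, pow_one, pow_zero, add_apply, Nat.cast_one, one_mul]
    rw [add_comm]
    gcongr
  | succ n ih =>
    let s : EF G := fun y => (n + 1 : ℕ) * b * (t ^ n) y
    have hs : ∀ y, (s * t) y = (n + 1 : ℕ) * b * (t ^ (n + 1)) y := by
      intro y
      rw [pow_succ, mul_apply, mul_apply, ← ENNReal.tsum_mul_left]
      refine tsum_congr fun x => ?_
      simp only [s, mul_assoc]
    have h1 : ((s + t ^ (n + 1)) * (t + w)) y ≤ ((t + w) ^ (n + 1) * (t + w)) y :=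
      mul_le_mul'' (fun x => ih x) (fun _ => le_rfl) y
    rw [pow_succ (t + w)]
    refine le_trans ?_ h1
    rw [add_mul, mul_add, mul_add, add_apply, add_apply, add_apply, hs, ← pow_succ]
    have h2 := hwb (t ^ (n + 1)) y
    calc _ = (n + 1 : ℕ) * b * (t ^ (n + 1)) y + 0 + ((t ^ (n + 1 + 1)) y + b * (t ^ (n + 1)) y) := by
          push_cast; ring
      _ ≤ _ := by gcongr; exact zero_le

theorem pow_sup {v : EF G} (hv : Sym v) (hm : mass v ≤ 1) (n : ℕ) (g : G) :
    ((v * v) ^ (n + 1)) g ≤ ((v * v) ^ n) 1 := by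
  have h1 : ∀ x, ((v * v) ^ n) x ≤ ((v * v) ^ n) 1 := by
    intro x
    have : (v * v) ^ n = v ^ n * v ^ n := by rw [← sq, ← pow_mul, ← pow_add]; congr 1; ring
    rw [this]
    exact sq_apply_le (sym_pow hv n) x
  rw [pow_succ']
  refine (mul_le_mass _ _ _ h1 g).trans ?_
  rw [mass_mul]
  calc _ ≤ 1 * 1 * ((v * v) ^ n) 1 := by gcongr
    _ = _ := by simp

theorem core (F : Subgroup G) (hF : F.Normal) (hfin : (F : Set G).Finite)
    (m : EF G) (hs : Sym m) (hm : mass m = 1) (k M : ℕ)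
    (hk : ∀ f ∈ F, 0 < (m ^ k) f) (hM : ∀ n, M ≤ n → 0 < (m ^ n) 1) :
    ∃ c : ℝ≥0∞, 0 < c ∧ ∀ f ∈ F, ∀ n r, M ≤ r → r < M + 2 * k →
      ∃ A B W S : ℝ≥0∞, (m ^ (r + k * 2 * (n + 1))) f = A + W ∧
        (m ^ (r + k * 2 * (n + 1))) 1 = B + W ∧ A ≤ S ∧ B ≤ S ∧ S ≤ 1 ∧
        c * ((n + 1 : ℕ) * S) ≤ (m ^ (r + k * 2 * (n + 1))) 1 := by
  obtain ⟨f0, hf0, hmin⟩ := Set.exists_min_image (F : Set G) (fun x => (m ^ k) x) hfin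
    ⟨1, F.one_mem⟩
  obtain ⟨d, hd, hdr⟩ : ∃ d : ℝ≥0∞, 0 < d ∧ ∀ r, M ≤ r → r < M + 2 * k → d ≤ (m ^ r) 1 := by
    rcases (Finset.Ico M (M + 2 * k)).eq_empty_or_nonempty with h | h
    · refine ⟨1, one_pos, fun r h1 h2 => ?_⟩
      have : r ∈ Finset.Ico M (M + 2 * k) := Finset.mem_Ico.2 ⟨h1, h2⟩
      simp [h] at this
    · obtain ⟨r0, hr0, h0⟩ := Finset.exists_min_image _ (fun r => (m ^ r) 1) h
      exact ⟨(m ^ r0) 1, hM _ (Finset.mem_Ico.1 hr0).1,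
        fun r h1 h2 => h0 r (Finset.mem_Ico.2 ⟨h1, h2⟩)⟩
  set c0 := (m ^ k) f0 with hc0
  have hc0pos : 0 < c0 := hk f0 hf0
  let u : EF G := fun x => if x ∈ F then c0 else 0
  let p : EF G := m ^ k
  let v : EF G := fun x => p x - u x
  have hu : ∀ x, u x ≤ p x := by
    intro x
    by_cases hx : x ∈ F
    · simp only [u, hx, if_true]
      exact hmin x hx
    · simp [u, hx]
  have hp : p = v + u := ext' fun x => (tsub_add_cancel_of_le (hu x)).symm
  have hvp : ∀ x, v x ≤ p x := fun x => tsub_le_self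
  have hvm : mass v ≤ 1 := by
    have : mass p = 1 := by rw [mass_pow, hm, one_pow]
    rw [← this]
    exact ENNReal.tsum_le_tsum hvp
  have hps : Sym p := sym_pow hs k
  have hvs : Sym v := by
    intro x
    simp only [v, u, inv_mem_iff]
    rw [hps x]
  have hui : Inv F u := by
    intro x f hf
    simp only [u, F.mul_mem_cancel_right hf]
  let w : EF G := v * u + u * p
  have hwi : Inv F w := (hui.mul_left v).add (hui.mul_right hF p)
  have hQ : m ^ (k * 2) = v * v + w := by
    have h1 : m ^ (k * 2) = p * p := by rw [pow_mul, sq]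
    rw [h1]
    calc p * p = (v + u) * p := by rw [← hp]
      _ = v * p + u * p := add_mul _ _ _
      _ = v * (v + u) + u * p := by rw [← hp]
      _ = _ := by rw [mul_add, add_assoc]
  have hw1 : c0 * c0 ≤ w 1 := by
    have h1 := le_mul u p 1 1
    rw [mul_one] at h1
    have h2 : c0 * c0 ≤ u 1 * p 1 := by
      refine mul_le_mul' ?_ (hmin 1 F.one_mem)
      simp [u, F.one_mem]
    exact (h2.trans h1).trans le_add_self
  refine ⟨d * (c0 * c0), ENNReal.mul_pos hd.ne' (ENNReal.mul_pos hc0pos.ne' hc0pos.ne').ne', ?_⟩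
  intro f hf n r hr1 hr2
  obtain ⟨W, hW, e⟩ := pow_decomp hF (t := v * v) hwi (n + 1)
  have hN : m ^ (r + k * 2 * (n + 1)) = m ^ r * (v * v) ^ (n + 1) + m ^ r * W := by
    rw [pow_add, pow_mul, hQ, e, mul_add]
  have hb : ∀ g, (m ^ r * (v * v) ^ (n + 1)) g ≤ ((v * v) ^ n) 1 := by
    intro g
    refine (mul_le_mass _ _ _ (fun x => pow_sup hvs hvm n x) g).trans ?_
    rw [mass_pow, hm, one_pow, one_mul]
  refine ⟨(m ^ r * (v * v) ^ (n + 1)) f, (m ^ r * (v * v) ^ (n + 1)) 1, (m ^ r * W) 1,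
    ((v * v) ^ n) 1, ?_, ?_, hb f, hb 1, ?_, ?_⟩
  · rw [hN, add_apply]
    have := (hW.mul_left (m ^ r)) 1 f hf
    rw [one_mul] at this
    rw [this]
  · rw [hN, add_apply]
  · refine (le_mass _ _).trans ?_
    rw [mass_pow, mass_mul]
    exact pow_le_one' (mul_le_one' hvm hvm) n
  · have h1 := le_mul (m ^ r) (m ^ (k * 2 * (n + 1))) 1 1
    rw [mul_one, ← pow_add] at h1
    refine le_trans ?_ h1
    have h2 := pow_lower (t := v * v) (w := w) (c0 * c0) hw1 n 1
    rw [pow_mul, hQ]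
    calc _ = d * (((n + 1 : ℕ) * (c0 * c0) * ((v * v) ^ n) 1)) := by ring
      _ ≤ _ := mul_le_mul' (hdr r hr1 hr2) (le_self_add.trans h2)

end EF

theorem convPow_eq_EF {G : Type*} [Group G] (μ : G → ℝ) (h0 : ∀ x, 0 ≤ μ x) (m : EF G)
    (hm : ∀ x, m x = ENNReal.ofReal (μ x)) (h1 : EF.mass m = 1) (n : ℕ) (y : G) :
    convPow μ n y = ((m ^ n) y).toReal := by
  induction n generalizing y with
  | zero =>
    simp only [convPow, pow_zero, EF.one_apply]
    split_ifs <;> simp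
  | succ n ih =>
    have hfin : ∀ x, (m ^ n) x ≠ ⊤ := by
      intro x
      have := EF.le_mass (m ^ n) x
      rw [EF.mass_pow, h1, one_pow] at this
      exact ne_top_of_le_ne_top ENNReal.one_ne_top this
    rw [pow_succ, EF.mul_apply, ENNReal.tsum_toReal_eq]
    · simp only [convPow, conv]
      refine tsum_congr fun x => ?_
      rw [ih, ENNReal.toReal_mul, hm, ENNReal.toReal_ofReal (h0 _)]
    · intro x
      exact ENNReal.mul_ne_top (hfin x) (by rw [hm]; exact ENNReal.ofReal_ne_top)

theorem stmt7 {G : Type*} [Group G] [Group.FG G] (μ : G → ℝ)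
    (hprob : IsProb μ) (hsymm : MeasSymm μ) (haper : IsAperiodic μ)
    (hgen : GeneratingSupport μ)
    (F : Subgroup G) (hnorm : F.Normal) (hfin : (F : Set G).Finite) :
    (F : Set G) ⊆ Amu μ := by
  obtain ⟨h0, hsum⟩ := hprob
  let m : EF G := fun x => ENNReal.ofReal (μ x)
  have hmdef : ∀ x, m x = ENNReal.ofReal (μ x) := fun _ => rfl
  have hsumm : Summable μ := by
    by_contra h
    rw [tsum_eq_zero_of_not_summable h] at hsum
    exact zero_ne_one hsum
  have hm : EF.mass m = 1 := by
    have := ENNReal.ofReal_tsum_of_nonneg h0 hsumm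
    rw [hsum, ENNReal.ofReal_one] at this
    exact this.symm
  have hs : EF.Sym m := by
    intro x
    rw [hmdef, hmdef, hsymm]
  have hcp := convPow_eq_EF μ h0 m hmdef hm
  have hle1 : ∀ n x, (m ^ n) x ≤ 1 := by
    intro n x
    have := EF.le_mass (m ^ n) x
    rwa [EF.mass_pow, hm, one_pow] at this
  have hnt : ∀ n x, (m ^ n) x ≠ ⊤ := fun n x => ne_top_of_le_ne_top ENNReal.one_ne_top (hle1 n x)
  have hmul : ∀ i j x y, 0 < (m ^ i) x → 0 < (m ^ j) y → 0 < (m ^ (i + j)) (x * y) := by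
    intro i j x y hx hy
    rw [pow_add]
    exact (ENNReal.mul_pos hx.ne' hy.ne').trans_le (EF.le_mul _ _ x y)
  have hreach : ∀ g : G, ∃ n, 0 < (m ^ n) g := by
    intro g
    have hg : g ∈ Subgroup.closure {x : G | 0 < μ x} := by
      rw [hgen]; trivial
    induction hg using Subgroup.closure_induction with
    | mem x hx =>
      refine ⟨1, ?_⟩
      rw [pow_one, hmdef]
      exact ENNReal.ofReal_pos.2 hx
    | one => exact ⟨0, by simp [EF.one_apply]⟩
    | mul x y _ _ hx hy =>
      obtain ⟨i, hi⟩ := hx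
      obtain ⟨j, hj⟩ := hy
      exact ⟨i + j, hmul i j x y hi hj⟩
    | inv x _ hx =>
      obtain ⟨i, hi⟩ := hx
      exact ⟨i, by rwa [EF.sym_pow hs i x]⟩
  have htwo : 0 < (m ^ 2) 1 := by
    obtain ⟨x, hx⟩ : ∃ x, m x ≠ 0 := by
      by_contra! h
      have : EF.mass m = 0 := ENNReal.tsum_eq_zero.2 h
      rw [hm] at this
      exact one_ne_zero this
    have hx' : 0 < (m ^ 1) x := by rw [pow_one]; exact pos_iff_ne_zero.2 hx
    have hx'' : 0 < (m ^ 1) x⁻¹ := by rwa [EF.sym_pow hs 1 x]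
    have := hmul 1 1 x x⁻¹ hx' hx''
    rwa [mul_inv_cancel] at this
  obtain ⟨M, hModd, hM⟩ : ∃ M, ¬ 2 ∣ M ∧ 0 < (m ^ M) 1 := by
    by_contra! h
    have := haper 2 (fun n _ hpos => by
      by_contra hn
      have h3 := h n hn
      rw [hcp, nonpos_iff_eq_zero.1 h3] at hpos
      simp at hpos)
    omega
  have heven : ∀ j, 0 < (m ^ (2 * j)) 1 := by
    intro j
    induction j with
    | zero => simp [EF.one_apply]
    | succ j ih =>
      have := hmul _ _ 1 1 ih htwo
      rwa [mul_one] at this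
  have hall : ∀ n, M ≤ n → 0 < (m ^ n) 1 := by
    intro n hn
    by_cases h2 : 2 ∣ n
    · obtain ⟨j, rfl⟩ := h2
      exact heven j
    · have h3 : n = 2 * ((n - M) / 2) + M := by omega
      have := hmul _ _ 1 1 (heven ((n - M) / 2)) hM
      rw [mul_one] at this
      rwa [h3]
  choose t ht using hreach
  obtain ⟨T, hT⟩ : ∃ T, ∀ f ∈ F, t f ≤ T := by
    obtain ⟨T, hT⟩ := (hfin.image t).bddAbove
    exact ⟨T, fun f hf => hT (Set.mem_image_of_mem t hf)⟩
  let k := T + M + 1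
  have hk : ∀ f ∈ F, 0 < (m ^ k) f := by
    intro f hf
    have h1 := hT f hf
    have h2 := hmul _ _ f 1 (ht f) (hall (k - t f) (by omega))
    rw [mul_one] at h2
    have h3 : k = t f + (k - t f) := by omega
    rwa [h3]
  obtain ⟨c, hc, H⟩ := EF.core F hnorm hfin m hs hm k M hk hall
  -- replace `c` by a finite constant
  let c' : ℝ := (min c 1).toReal
  have hctop : min c 1 ≠ ⊤ := ne_top_of_le_ne_top ENNReal.one_ne_top (min_le_right _ _)
  have hc' : 0 < c' := ENNReal.toReal_pos (lt_min hc one_pos).ne' hctop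
  intro f hf
  have key : ∀ N, M + 2 * k ≤ N →
      |convPow μ N f / convPow μ N 1 - 1| ≤ 1 / (c' * (((N - M) / (2 * k) : ℕ) : ℝ)) := by
    intro N hN
    have hkpos : 0 < 2 * k := by omega
    obtain ⟨n, hn⟩ : ∃ n, (N - M) / (2 * k) = n + 1 := by
      have : 1 ≤ (N - M) / (2 * k) := (Nat.one_le_div_iff hkpos).2 (by omega)
      exact ⟨(N - M) / (2 * k) - 1, by omega⟩
    have hr : (N - M) % (2 * k) < 2 * k := Nat.mod_lt _ hkpos
    have hdiv := Nat.div_add_mod (N - M) (2 * k)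
    rw [hn] at hdiv
    obtain ⟨A, B, W, S, e1, e2, hA, hB, hS, hlow⟩ :=
      H f hf n (M + (N - M) % (2 * k)) (by omega) (by omega)
    have hNe : M + (N - M) % (2 * k) + k * 2 * (n + 1) = N := by
      rw [mul_comm k 2]; omega
    rw [hNe] at e1 e2 hlow
    have hStop : S ≠ ⊤ := ne_top_of_le_ne_top ENNReal.one_ne_top hS
    have hAtop : A ≠ ⊤ := ne_top_of_le_ne_top hStop hA
    have hBtop : B ≠ ⊤ := ne_top_of_le_ne_top hStop hB
    have hWtop : W ≠ ⊤ := by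
      intro h
      apply hnt N 1
      rw [e2, h, add_top]
    have hpos : 0 < convPow μ N 1 := by
      rw [hcp]
      exact ENNReal.toReal_pos (hall N (by omega)).ne' (hnt _ _)
    have r1 : convPow μ N f = A.toReal + W.toReal := by
      rw [hcp, e1, ENNReal.toReal_add hAtop hWtop]
    have r2 : convPow μ N 1 = B.toReal + W.toReal := by
      rw [hcp, e2, ENNReal.toReal_add hBtop hWtop]
    have rA : A.toReal ≤ S.toReal := ENNReal.toReal_mono hStop hA
    have rB : B.toReal ≤ S.toReal := ENNReal.toReal_mono hStop hB
    have rlow : c' * (((n + 1 : ℕ) : ℝ) * S.toReal) ≤ convPow μ N 1 := by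
      have h1 : min c 1 * ((n + 1 : ℕ) * S) ≤ (m ^ N) 1 :=
        (mul_le_mul' (min_le_left _ _) le_rfl).trans hlow
      have h2 := ENNReal.toReal_mono (hnt N 1) h1
      rw [ENNReal.toReal_mul, ENNReal.toReal_mul, ENNReal.toReal_natCast] at h2
      rw [hcp]
      exact h2
    have habs : |convPow μ N f - convPow μ N 1| ≤ S.toReal := by
      have a0 : 0 ≤ A.toReal := ENNReal.toReal_nonneg
      have b0 : 0 ≤ B.toReal := ENNReal.toReal_nonneg
      rw [r1, r2, abs_le]
      constructor <;> linarith
    rw [hn, div_sub_one hpos.ne', abs_div, abs_of_pos hpos, div_le_div_iff₀ hpos (by positivity)]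
    have hcn : 0 ≤ c' * ((n + 1 : ℕ) : ℝ) := by positivity
    have := mul_le_mul_of_nonneg_right habs hcn
    nlinarith
  have hlim : Tendsto (fun N : ℕ => 1 / (c' * (((N - M) / (2 * k) : ℕ) : ℝ))) atTop (𝓝 0) := by
    have hq : Tendsto (fun N : ℕ => (N - M) / (2 * k)) atTop atTop :=
      (Nat.tendsto_div_const_atTop (by omega)).comp (tendsto_sub_atTop_nat M)
    have := (tendsto_natCast_atTop_atTop (R := ℝ)).comp hq
    exact (tendsto_const_nhds (x := (1 : ℝ))).div_atTop (this.const_mul_atTop hc')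
  change Tendsto (fun n => convPow μ n f / convPow μ n 1) atTop (𝓝 1)
  rw [tendsto_iff_norm_sub_tendsto_zero]
  refine squeeze_zero' (Eventually.of_forall fun _ => norm_nonneg _) ?_ hlim
  filter_upwards [eventually_ge_atTop (M + 2 * k)] with N hN
  exact key N hN
end

section
/- Let F_d be a free group of rank d ≥ 2 with free basis containing elements a and b, and let μ be a symmetric aperiodic probability measure on F_d with support generating F_d, satisfying μ(e) > 0 and invariant under the automorphism swapping a and b (so in particular μ(a) = μ(b)). Then A_μ is trivial. -/
open Filter Topology
open scoped Classical

theorem comb {α : Type*} [DecidableEq α] (a b : α) (hab : a ≠ b) (c : FreeGroup α) (hc : c ≠ 1) :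
    ∃ (x : FreeGroup α) (E : Set (FreeGroup α)),
      (∀ g ∈ E, ∀ n : ℕ, 0 < n → c ^ n * g ∉ E) ∧ (∀ g, g ∈ E ∨ x⁻¹ * g ∈ E) := by
  set L := FreeGroup.reduceCyclically c.toWord with hL
  have hcyc : FreeGroup.IsCyclicallyReduced L :=
    FreeGroup.reduceCyclically.isCyclicallyReduced FreeGroup.isReduced_toWord
  set u : FreeGroup α := FreeGroup.mk (FreeGroup.reduceCyclically.conjugator c.toWord) with hu
  have hcw : c = u * FreeGroup.mk L * u⁻¹ := by
    have := FreeGroup.reduceCyclically.conj_conjugator_reduceCyclically c.toWord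
    rw [hu, hL, FreeGroup.inv_mk, FreeGroup.mul_mk, FreeGroup.mul_mk, this, FreeGroup.mk_toWord]
  have hLne : L ≠ [] := by
    intro h
    apply hc
    rw [hcw, h]
    simp [← FreeGroup.one_eq_mk]
  obtain ⟨s, hs⟩ : ∃ s, L.head? = some s := by
    cases hh : L with
    | nil => exact absurd hh hLne
    | cons s l => exact ⟨s, rfl⟩
  obtain ⟨e, hee⟩ : ∃ e, L.getLast? = some e := ⟨_, List.getLast?_eq_some_getLast hLne⟩
  have hse := hcyc.2 e (by simp [hee]) s (by simp [hs])
  -- powers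
  have hpow : ∀ n : ℕ, (FreeGroup.mk L) ^ n = FreeGroup.mk (List.replicate n L).flatten :=
    fun n => by simp [FreeGroup.pow_mk]
  -- choice of z
  obtain ⟨Z, p, q, hZr, hZp, hZq, hp1, hp2, hq1, hq2⟩ : ∃ (Z : List (α × Bool)) (p q : α × Bool),
      FreeGroup.IsReduced Z ∧ Z.head? = some p ∧ Z.getLast? = some q ∧ p ≠ s ∧ p ≠ (e.1, !e.2) ∧
      (q.1 = s.1 → q.2 = s.2) ∧ (q.1 = e.1 → q.2 = !e.2) := by
    by_cases h : s.1 = e.1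
    · obtain ⟨r, hr⟩ : ∃ r, r ≠ s.1 := by
        by_cases h : s.1 = a
        · exact ⟨b, by rw [h]; exact hab.symm⟩
        · exact ⟨a, fun h' => h h'.symm⟩
      refine ⟨[(r, true)], (r, true), (r, true), ?_, rfl, rfl, ?_, ?_, ?_, ?_⟩
      · simp
      · intro h1; exact hr (by rw [← h1])
      · intro h1; apply hr; rw [h]; exact congrArg Prod.fst h1
      · intro h1; exact absurd h1 hr
      · intro h1; exact absurd (h1.trans h.symm) hr
    · refine ⟨[(s.1, !s.2), (e.1, !e.2), s], (s.1, !s.2), s, ?_, rfl, rfl, ?_, ?_, ?_, ?_⟩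
      · simp [FreeGroup.IsReduced, h, Ne.symm h]
      · intro h1
        have := congrArg Prod.snd h1
        simp at this
      · intro h1; simp only [Prod.mk.injEq] at h1; exact h h1.1
      · intro _; rfl
      · intro h1; exact absurd h1 h
  set z : FreeGroup α := FreeGroup.mk Z
  let E0 : Set (FreeGroup α) := {h | ∀ l ∈ h.toWord.head?, l ≠ s ∧ l ≠ (e.1, !e.2)}
  have key : ∀ (K : List (α × Bool)) (h : FreeGroup α), FreeGroup.IsReduced K →
      (∀ x ∈ K.getLast?, ∀ y ∈ h.toWord.head?, x.1 = y.1 → x.2 = y.2) →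
      (FreeGroup.mk K * h).toWord = K ++ h.toWord := by
    intro K h hK hx
    have h1 : FreeGroup.IsReduced (K ++ h.toWord) := by
      have h2 : FreeGroup.IsReduced h.toWord := FreeGroup.isReduced_toWord
      unfold FreeGroup.IsReduced at *
      rw [List.isChain_append]
      exact ⟨hK, h2, hx⟩
    rw [← h1.reduce_eq, ← FreeGroup.toWord_mk, ← FreeGroup.mul_mk, FreeGroup.mk_toWord]
  refine ⟨u * z⁻¹ * u⁻¹, {g | u⁻¹ * g ∈ E0}, ?_, ?_⟩
  · intro g hg n hn hmem
    simp only [Set.mem_ofPred_eq] at hg hmem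
    have h1 : u⁻¹ * (c ^ n * g) = FreeGroup.mk (List.replicate n L).flatten * (u⁻¹ * g) := by
      rw [hcw, conj_pow, hpow]; group
    rw [h1] at hmem
    have h2 := key (List.replicate n L).flatten (u⁻¹ * g) (hcyc.flatten_replicate n).1 (by
      intro x hx y hy hxy
      rw [Option.mem_def, List.getLast?_flatten_replicate (h := by lia), hee] at hx
      obtain rfl : e = x := by simpa using hx
      have := (hg y hy).2
      by_contra hne
      apply this
      ext
      · exact hxy.symm
      · simp only
        revert hne
        cases e.2 <;> cases y.2 <;> simp)
    have := (hmem s (by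
      rw [h2, Option.mem_def, List.head?_append, List.head?_flatten_replicate (h := by lia), hs]
      rfl)).1
    exact this rfl
  · intro g
    simp only [Set.mem_ofPred_eq]
    by_cases hg : u⁻¹ * g ∈ E0
    · exact Or.inl hg
    · right
      have h1 : u⁻¹ * ((u * z⁻¹ * u⁻¹)⁻¹ * g) = z * (u⁻¹ * g) := by group
      rw [h1]
      have h2 : ∃ l ∈ (u⁻¹ * g).toWord.head?, l = s ∨ l = (e.1, !e.2) := by
        by_contra hcon
        apply hg
        intro l hl
        by_contra h3
        exact hcon ⟨l, hl, by tauto⟩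
      obtain ⟨l, hl, hl2⟩ := h2
      have h3 := key Z (u⁻¹ * g) hZr (by
        intro x hx y hy
        rw [Option.mem_def] at hl hx hy
        rw [hl] at hy
        rw [hZq] at hx
        obtain rfl : q = x := by simpa using hx
        obtain rfl : l = y := by simpa using hy
        rcases hl2 with rfl | rfl
        · exact hq1
        · exact hq2)
      intro l' hl'
      rw [h3, Option.mem_def, List.head?_append, hZp] at hl'
      obtain rfl : p = l' := by simpa using hl'
      exact ⟨hp1, hp2⟩

theorem summable_conv2 {G : Type*} [Group G] {f g : G → ℝ} (hf : ∀ x, 0 ≤ f x) (hg : ∀ x, 0 ≤ g x)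
    (sf : Summable f) (sg : Summable g) :
    Summable (fun p : G × G => f p.1 * g (p.1⁻¹ * p.2)) := by
  let e : G × G ≃ G × G :=
    ⟨fun p => (p.1, p.1⁻¹ * p.2), fun p => (p.1, p.1 * p.2), fun p => by simp, fun p => by simp⟩
  have h := sf.mul_of_nonneg sg hf hg
  exact (e.summable_iff.mpr h)

theorem summable_translate {G : Type*} [Group G] {f : G → ℝ} (sf : Summable f) (c : G) :
    Summable (fun x => f (c * x)) := (Equiv.mulLeft c).summable_iff.mpr sf

theorem tsum_translate {G : Type*} [Group G] (f : G → ℝ) (c : G) :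
    ∑' x, f (c * x) = ∑' x, f x := (Equiv.mulLeft c).tsum_eq f

theorem le_of_summ {G : Type*} {f : G → ℝ} (hf : ∀ x, 0 ≤ f x) (sf : Summable f) (x : G) :
    f x ≤ ∑' y, f y := sf.le_tsum x (fun y _ => hf y)

theorem summable_mul_of_nn {G : Type*} {f g : G → ℝ} (hf : ∀ x, 0 ≤ f x) (hg : ∀ x, 0 ≤ g x)
    (sf : Summable f) (sg : Summable g) : Summable (fun x => f x * g x) :=
  Summable.of_nonneg_of_le (fun x => mul_nonneg (hf x) (hg x))
    (fun x => mul_le_mul_of_nonneg_left (le_of_summ hg sg x) (hf x)) (sf.mul_right _)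

theorem summable_inv {G : Type*} [Group G] {f : G → ℝ} (sf : Summable f) :
    Summable (fun x => f x⁻¹) := (Equiv.inv G).summable_iff.mpr sf

theorem summable_conv_term {G : Type*} [Group G] {f g : G → ℝ} (hf : ∀ x, 0 ≤ f x)
    (hg : ∀ x, 0 ≤ g x) (sf : Summable f) (sg : Summable g) (y : G) :
    Summable (fun x => f x * g (x⁻¹ * y)) := by
  refine summable_mul_of_nn (g := fun x => g (x⁻¹ * y)) hf (fun x => hg _) sf ?_
  have : Summable (fun x => g (x * y)) := (Equiv.mulRight y).summable_iff.mpr sg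
  exact summable_inv (f := fun x => g (x * y)) this

theorem conv_nonneg' {G : Type*} [Group G] {f g : G → ℝ} (hf : ∀ x, 0 ≤ f x) (hg : ∀ x, 0 ≤ g x)
    (y : G) : 0 ≤ conv f g y := tsum_nonneg fun x => mul_nonneg (hf x) (hg _)

theorem conv_summable {G : Type*} [Group G] {f g : G → ℝ} (hf : ∀ x, 0 ≤ f x) (hg : ∀ x, 0 ≤ g x)
    (sf : Summable f) (sg : Summable g) : Summable (conv f g) :=
  (summable_conv2 hf hg sf sg).prod_symm.prod

theorem conv_tsum {G : Type*} [Group G] {f g : G → ℝ} (hf : ∀ x, 0 ≤ f x) (hg : ∀ x, 0 ≤ g x)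
    (sf : Summable f) (sg : Summable g) : ∑' y, conv f g y = (∑' x, f x) * ∑' x, g x := by
  have h := summable_conv2 hf hg sf sg
  unfold conv
  rw [Summable.tsum_comm (f := fun x y => f x * g (x⁻¹ * y)) h]
  simp_rw [tsum_mul_left, tsum_translate g, tsum_mul_right]

theorem conv_assoc' {G : Type*} [Group G] {f g h : G → ℝ} (hf : ∀ x, 0 ≤ f x) (hg : ∀ x, 0 ≤ g x)
    (hh : ∀ x, 0 ≤ h x) (sf : Summable f) (sg : Summable g) (sh : Summable h) :
    conv (conv f g) h = conv f (conv g h) := by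
  funext y
  unfold conv
  have s : Summable (fun p : G × G => f p.1 * g (p.1⁻¹ * p.2) * h (p.2⁻¹ * y)) := by
    refine Summable.of_nonneg_of_le
      (fun p => mul_nonneg (mul_nonneg (hf _) (hg _)) (hh _))
      (fun p => mul_le_mul_of_nonneg_left (le_of_summ hh sh _) (mul_nonneg (hf _) (hg _)))
      ((summable_conv2 hf hg sf sg).mul_right _)
  simp_rw [← tsum_mul_right]
  rw [Summable.tsum_comm (f := fun x w => f x * g (x⁻¹ * w) * h (w⁻¹ * y)) s]
  refine tsum_congr fun x => ?_
  rw [← tsum_translate _ x, ← tsum_mul_left]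
  refine tsum_congr fun z => ?_
  simp [mul_assoc]

section
variable {G : Type*} [Group G] {μ : G → ℝ}

theorem prob_summable (hp : IsProb μ) : Summable μ := by
  by_contra h
  have := hp.2
  rw [tsum_eq_zero_of_not_summable h] at this
  exact zero_ne_one this

theorem convPow_props (hp : IsProb μ) (n : ℕ) :
    (∀ x, 0 ≤ convPow μ n x) ∧ Summable (convPow μ n) ∧ ∑' x, convPow μ n x = 1 := by
  induction n with
  | zero =>
    have h : HasSum (fun x : G => if x = 1 then (1 : ℝ) else 0) 1 := hasSum_ite_eq 1 1
    refine ⟨fun x => ?_, h.summable, h.tsum_eq⟩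
    simp only [convPow]
    split_ifs <;> norm_num
  | succ n ih =>
    obtain ⟨h1, h2, h3⟩ := ih
    refine ⟨conv_nonneg' h1 hp.1, conv_summable h1 hp.1 h2 (prob_summable hp), ?_⟩
    have := conv_tsum h1 hp.1 h2 (prob_summable hp)
    rw [h3, hp.2] at this
    simpa [convPow] using this

theorem convPow_add (hp : IsProb μ) (m n : ℕ) :
    convPow μ (m + n) = conv (convPow μ m) (convPow μ n) := by
  induction n with
  | zero =>
    funext y
    simp only [conv, convPow, add_zero]
    rw [tsum_eq_single y]
    · simp
    · intro x hx
      rw [if_neg, mul_zero]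
      intro h
      exact hx (inv_mul_eq_one.mp h)
  | succ n ih =>
    obtain ⟨h1, h2, -⟩ := convPow_props hp m
    obtain ⟨h1', h2', -⟩ := convPow_props hp n
    change conv (convPow μ (m + n)) μ = conv (convPow μ m) (conv (convPow μ n) μ)
    rw [ih, conv_assoc' h1 h1' hp.1 h2 h2' (prob_summable hp)]

theorem convPow_one : convPow μ 1 = μ := by
  funext y
  simp only [conv, convPow]
  rw [tsum_eq_single 1]
  · simp
  · intro x hx
    rw [if_neg hx, zero_mul]

theorem convPow_symm (hp : IsProb μ) (hs : MeasSymm μ) (n : ℕ) (x : G) :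
    convPow μ n x⁻¹ = convPow μ n x := by
  induction n generalizing x with
  | zero => simp [convPow]
  | succ n ih =>
    have h : convPow μ (n + 1) x = conv μ (convPow μ n) x := by
      rw [add_comm, convPow_add hp, convPow_one]
    rw [h]
    simp only [convPow, conv]
    rw [← tsum_translate _ x⁻¹]
    refine tsum_congr fun z => ?_
    rw [← ih, ← hs, mul_comm]
    simp

theorem convPow_mul_le (hp : IsProb μ) (m n : ℕ) (x y : G) :
    convPow μ m x * convPow μ n y ≤ convPow μ (m + n) (x * y) := by
  rw [convPow_add hp]
  obtain ⟨h1, h2, -⟩ := convPow_props hp m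
  obtain ⟨h1', h2', -⟩ := convPow_props hp n
  have := (summable_conv_term h1 h1' h2 h2' (x * y)).le_tsum x
    (fun z _ => mul_nonneg (h1 _) (h1' _))
  simpa [conv] using this

theorem convPow_one_pos (hp : IsProb μ) (he : 0 < μ 1) (n : ℕ) : 0 < convPow μ n 1 := by
  induction n with
  | zero => simp [convPow]
  | succ n ih =>
    have := convPow_mul_le hp n 1 1 1
    rw [convPow_one, mul_one] at this
    exact lt_of_lt_of_le (mul_pos ih he) this

theorem convPow_exists_pos (hp : IsProb μ) (hs : MeasSymm μ) (hgen : GeneratingSupport μ)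
    (x : G) : ∃ n, 0 < convPow μ n x := by
  have hx : x ∈ Subgroup.closure {x : G | 0 < μ x} := by
    rw [show Subgroup.closure {x : G | 0 < μ x} = ⊤ from hgen]; trivial
  induction hx using Subgroup.closure_induction with
  | mem x hx => exact ⟨1, by rw [convPow_one]; exact hx⟩
  | one => exact ⟨0, by simp [convPow]⟩
  | mul x y _ _ hx hy =>
    obtain ⟨m, hm⟩ := hx
    obtain ⟨n, hn⟩ := hy
    exact ⟨m + n, lt_of_lt_of_le (mul_pos hm hn) (convPow_mul_le hp m n x y)⟩
  | inv x _ hx =>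
    obtain ⟨m, hm⟩ := hx
    exact ⟨m, by rwa [convPow_symm hp hs]⟩

/-- even convolution powers are correlations -/
theorem convPow_even (hp : IsProb μ) (hs : MeasSymm μ) (n : ℕ) (x : G) :
    convPow μ (n + n) x = ∑' g, convPow μ n g * convPow μ n (x⁻¹ * g) := by
  rw [convPow_add hp]
  refine tsum_congr fun g => ?_
  rw [← convPow_symm hp hs n (g⁻¹ * x)]
  simp

theorem summable_corr (hp : IsProb μ) (n : ℕ) (x y : G) :
    Summable fun g => convPow μ n (x * g) * convPow μ n (y * g) := by
  obtain ⟨h1, h2, -⟩ := convPow_props hp n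
  exact summable_mul_of_nn (fun x => h1 _) (fun x => h1 _) (summable_translate h2 x)
    (summable_translate h2 y)

theorem diff_sq (hp : IsProb μ) (hs : MeasSymm μ) (n : ℕ) (x : G) :
    Summable (fun g => (convPow μ n g - convPow μ n (x * g)) ^ 2) ∧
    ∑' g, (convPow μ n g - convPow μ n (x * g)) ^ 2 =
      2 * (convPow μ (n + n) 1 - convPow μ (n + n) x) := by
  have s1 := summable_corr hp n (1 : G) 1
  have s2 := summable_corr hp n x x
  have s3 := summable_corr hp n 1 x
  have h := (s1.hasSum.add s2.hasSum).sub (s3.hasSum.mul_left 2)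
  have e1 : ∑' g, convPow μ n (1 * g) * convPow μ n (1 * g) = convPow μ (n + n) 1 := by
    rw [convPow_even hp hs]; simp
  have e2 : ∑' g, convPow μ n (x * g) * convPow μ n (x * g) = convPow μ (n + n) 1 := by
    rw [tsum_translate (fun g => convPow μ n g * convPow μ n g), ← e1]; simp
  have e3 : ∑' g, convPow μ n (1 * g) * convPow μ n (x * g) = convPow μ (n + n) x := by
    rw [← convPow_symm hp hs (n + n) x, convPow_even hp hs]; simp
  rw [e1, e2, e3] at h
  have h' : HasSum (fun g => (convPow μ n g - convPow μ n (x * g)) ^ 2)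
      (2 * (convPow μ (n + n) 1 - convPow μ (n + n) x)) := by
    have e4 : (fun g => (convPow μ n g - convPow μ n (x * g)) ^ 2) = fun g =>
        convPow μ n (1 * g) * convPow μ n (1 * g) + convPow μ n (x * g) * convPow μ n (x * g) -
        2 * (convPow μ n (1 * g) * convPow μ n (x * g)) := by
      funext g
      rw [one_mul]; ring
    rw [e4, show 2 * (convPow μ (n + n) 1 - convPow μ (n + n) x) =
      convPow μ (n + n) 1 + convPow μ (n + n) 1 - 2 * convPow μ (n + n) x by ring]
    exact h
  exact ⟨h'.summable, h'.tsum_eq⟩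

theorem convPow_even_le (hp : IsProb μ) (hs : MeasSymm μ) (n : ℕ) (x : G) :
    convPow μ (n + n) x ≤ convPow μ (n + n) 1 := by
  have h := (diff_sq hp hs n x).2
  have : 0 ≤ ∑' g, (convPow μ n g - convPow μ n (x * g)) ^ 2 := tsum_nonneg fun _ => sq_nonneg _
  linarith

/-- lower bound -/
theorem convPow_lower (hp : IsProb μ) (hs : MeasSymm μ) (k n : ℕ) (x : G) :
    convPow μ (k + k) x * convPow μ ((n + k) + (n + k)) 1 ≤ convPow μ ((n + k) + (n + k)) x := by
  have e : (n + k) + (n + k) = (k + k) + (n + n) := by ring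
  obtain ⟨h1, h2, h3⟩ := convPow_props hp (k + k)
  obtain ⟨h1', h2', -⟩ := convPow_props hp (n + n)
  have h := convPow_mul_le hp (k + k) (n + n) x 1
  rw [mul_one, ← e] at h
  refine le_trans (mul_le_mul_of_nonneg_left ?_ (h1 x)) h
  rw [e, convPow_add hp]
  have : conv (convPow μ (k + k)) (convPow μ (n + n)) 1 ≤
      ∑' y, convPow μ (k + k) y * convPow μ (n + n) 1 :=
    (summable_conv_term h1 h1' h2 h2' 1).tsum_le_tsum
      (fun y => mul_le_mul_of_nonneg_left (convPow_even_le hp hs n _) (h1 y)) (h2.mul_right _)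
  rwa [tsum_mul_right, h3, one_mul] at this

/-- defect of powers -/
theorem defect_pow (hp : IsProb μ) (hs : MeasSymm μ) (n : ℕ) (c : G) (i : ℕ) :
    convPow μ (n + n) 1 - convPow μ (n + n) (c ^ i) ≤
      4 ^ i * (convPow μ (n + n) 1 - convPow μ (n + n) c) := by
  induction i with
  | zero => simpa using convPow_even_le hp hs n c
  | succ i ih =>
    obtain ⟨s1, t1⟩ := diff_sq hp hs n c
    obtain ⟨s2, t2⟩ := diff_sq hp hs n (c ^ i)
    obtain ⟨s3, t3⟩ := diff_sq hp hs n (c ^ (i + 1))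
    have t2' := tsum_translate (fun g => (convPow μ n g - convPow μ n (c ^ i * g)) ^ 2) c
    have s2' := summable_translate s2 c
    have := s3.tsum_le_tsum (g := fun g => 2 * (convPow μ n g - convPow μ n (c * g)) ^ 2 +
      2 * (convPow μ n (c * g) - convPow μ n (c ^ i * (c * g))) ^ 2) (fun g => by
        rw [pow_succ c, mul_assoc]
        nlinarith [sq_nonneg ((convPow μ n g - convPow μ n (c * g)) -
          (convPow μ n (c * g) - convPow μ n (c ^ i * (c * g))))])
      ((s1.mul_left 2).add (s2'.mul_left 2))
    rw [(s1.mul_left 2).tsum_add (s2'.mul_left 2), tsum_mul_left, tsum_mul_left, t2', t1, t2, t3]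
      at this
    have hc := convPow_even_le hp hs n c
    have h4 : (1 : ℝ) ≤ 4 ^ i := one_le_pow₀ (by norm_num)
    rw [pow_succ (4 : ℝ)]
    nlinarith

/-- mass on a wandering set -/
theorem wandering (hp : IsProb μ) (hs : MeasSymm μ) (n : ℕ) (c : G) (E : Set G)
    (hE : ∀ g ∈ E, ∀ n : ℕ, 0 < n → c ^ n * g ∉ E) (N : ℕ) :
    N * ∑' g, E.indicator (fun g => convPow μ n g ^ 2) g ≤ 2 * convPow μ (n + n) 1 +
      N * 4 ^ N * 4 * (convPow μ (n + n) 1 - convPow μ (n + n) c) := by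
  set f := convPow μ n with hf
  have sf : Summable (fun g => f g ^ 2) := by
    have := summable_corr hp n (1 : G) 1
    simpa [sq] using this
  have tf : ∑' g, f g ^ 2 = convPow μ (n + n) 1 := by
    rw [convPow_even hp hs]; simp [sq, hf]
  have hc := convPow_even_le hp hs n c
  let F : ℕ → G → ℝ := fun i g => E.indicator (fun g => f (c ^ i * g) ^ 2) g
  have sF : ∀ i, Summable (F i) := fun i =>
    (summable_translate sf (c ^ i)).indicator E
  have h1 : ∀ i ∈ Finset.range N, ∑' g, E.indicator (fun g => f g ^ 2) g ≤
      2 * ∑' g, F i g + 4 ^ N * 4 * (convPow μ (n + n) 1 - convPow μ (n + n) c) := by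
    intro i hi
    obtain ⟨s, t⟩ := diff_sq hp hs n (c ^ i)
    have := (sf.indicator E).tsum_le_tsum
      (g := fun g => 2 * F i g + 2 * (f g - f (c ^ i * g)) ^ 2) (fun g => by
        by_cases hg : g ∈ E
        · simp only [F, Set.indicator_of_mem hg]
          nlinarith [sq_nonneg (f g - 2 * f (c ^ i * g))]
        · simp only [F, Set.indicator_of_notMem hg]
          positivity) (((sF i).mul_left 2).add (s.mul_left 2))
    rw [((sF i).mul_left 2).tsum_add (s.mul_left 2), tsum_mul_left, tsum_mul_left, t] at this
    have h2 := defect_pow hp hs n c i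
    have h3 : (4 : ℝ) ^ i ≤ 4 ^ N :=
      pow_le_pow_right₀ (by norm_num) (Finset.mem_range.mp hi).le
    nlinarith
  have h2 := Finset.sum_le_sum h1
  rw [Finset.sum_const, Finset.card_range, nsmul_eq_mul, Finset.sum_add_distrib, Finset.sum_const,
    Finset.card_range, nsmul_eq_mul, ← Finset.mul_sum] at h2
  have h3 : ∑ i ∈ Finset.range N, ∑' g, F i g ≤ convPow μ (n + n) 1 := by
    have e : ∀ i, ∑' g, F i g = ∑' g, F i ((c ^ i)⁻¹ * g) := fun i =>
      (tsum_translate (F i) (c ^ i)⁻¹).symm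
    have s' : ∀ i, Summable (fun g => F i ((c ^ i)⁻¹ * g)) := fun i =>
      summable_translate (sF i) (c ^ i)⁻¹
    simp_rw [e]
    rw [← Summable.tsum_finsetSum (fun i _ => s' i), ← tf]
    refine Summable.tsum_le_tsum (fun g => ?_) (summable_sum fun i _ => s' i) sf
    by_cases hex : ∃ i ∈ Finset.range N, (c ^ i)⁻¹ * g ∈ E
    · obtain ⟨i, hi, hig⟩ := hex
      rw [Finset.sum_eq_single i]
      · simp [F, Set.indicator_of_mem hig]
      · intro j _ hji
        refine Set.indicator_of_notMem (fun hjg => ?_) _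
        rcases lt_or_gt_of_ne hji with hlt | hlt
        · apply hE _ hig (i - j) (by lia)
          rw [← mul_assoc, show c ^ (i - j) * (c ^ i)⁻¹ = (c ^ j)⁻¹ from ?_]
          · exact hjg
          · obtain ⟨k, rfl⟩ := Nat.exists_eq_add_of_lt hlt
            rw [show j + k + 1 - j = k + 1 by lia, add_assoc, add_comm j, pow_add]; group
        · apply hE _ hjg (j - i) (by lia)
          rw [← mul_assoc, show c ^ (j - i) * (c ^ j)⁻¹ = (c ^ i)⁻¹ from ?_]
          · exact hig
          · obtain ⟨k, rfl⟩ := Nat.exists_eq_add_of_lt hlt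
            rw [show i + k + 1 - i = k + 1 by lia, add_assoc, add_comm i, pow_add]; group
      · intro h; exact absurd hi h
    · rw [Finset.sum_eq_zero]
      · positivity
      · intro i hi
        exact Set.indicator_of_notMem (fun h => hex ⟨i, hi, h⟩) _
  nlinarith

theorem upper (hp : IsProb μ) (hs : MeasSymm μ) (n : ℕ) (x : G) (E : Set G)
    (hE : ∀ g, g ∈ E ∨ x⁻¹ * g ∈ E) (t : ℝ) (ht : 0 < t) :
    convPow μ (n + n) x ≤ t * ∑' g, E.indicator (fun g => convPow μ n g ^ 2) g +
      t⁻¹ * convPow μ (n + n) 1 := by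
  set f := convPow μ n with hf
  have sf : Summable (fun g => f g ^ 2) := by
    have := summable_corr hp n (1 : G) 1
    simpa [sq] using this
  have tf : ∑' g, f g ^ 2 = convPow μ (n + n) 1 := by
    rw [convPow_even hp hs]; simp [sq, hf]
  set I : G → ℝ := E.indicator (fun g => f g ^ 2) with hI
  have sI : Summable I := sf.indicator E
  have I0 : ∀ g, 0 ≤ I g := fun g => Set.indicator_nonneg (fun _ _ => sq_nonneg _) g
  have sI' := summable_translate sI x⁻¹
  have sf' := summable_translate sf x⁻¹
  have hti : t * t⁻¹ = 1 := mul_inv_cancel₀ ht.ne'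
  have hti0 : 0 < t⁻¹ := inv_pos.mpr ht
  have amgm : ∀ p q : ℝ, p * q ≤ t / 2 * p ^ 2 + t⁻¹ / 2 * q ^ 2 := by
    intro p q
    have : t / 2 * p ^ 2 + t⁻¹ / 2 * q ^ 2 - p * q = t⁻¹ / 2 * (t * p - q) ^ 2 := by
      field_simp; ring
    have : 0 ≤ t⁻¹ / 2 * (t * p - q) ^ 2 := by positivity
    linarith
  have ss := summable_corr hp n 1 x⁻¹
  simp only [one_mul] at ss
  have := ss.tsum_le_tsum (g := fun g => (t / 2 * I g + t / 2 * I (x⁻¹ * g)) +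
    (t⁻¹ / 2 * f g ^ 2 + t⁻¹ / 2 * f (x⁻¹ * g) ^ 2)) (fun g => by
      have i1 := I0 g
      have i2 := I0 (x⁻¹ * g)
      rcases hE g with h | h
      · have e : I g = f g ^ 2 := Set.indicator_of_mem h _
        have := amgm (f g) (f (x⁻¹ * g))
        have : 0 ≤ t / 2 * I (x⁻¹ * g) := by positivity
        have : 0 ≤ t⁻¹ / 2 * f g ^ 2 := by positivity
        rw [e]; linarith
      · have e : I (x⁻¹ * g) = f (x⁻¹ * g) ^ 2 := Set.indicator_of_mem h _
        have := amgm (f (x⁻¹ * g)) (f g)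
        have : 0 ≤ t / 2 * I g := by positivity
        have : 0 ≤ t⁻¹ / 2 * f (x⁻¹ * g) ^ 2 := by positivity
        rw [e]; linarith)
    (((sI.mul_left _).add (sI'.mul_left _)).add ((sf.mul_left _).add (sf'.mul_left _)))
  rw [((sI.mul_left _).add (sI'.mul_left _)).tsum_add ((sf.mul_left _).add (sf'.mul_left _)),
    (sI.mul_left _).tsum_add (sI'.mul_left _), (sf.mul_left _).tsum_add (sf'.mul_left _)] at this
  simp only [tsum_mul_left] at this
  rw [tsum_translate I, tsum_translate (fun g => f g ^ 2), tf] at this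
  rw [convPow_even hp hs]
  linarith

end

theorem stmt9 {α : Type*} [Finite α] [DecidableEq α] (a b : α) (hab : a ≠ b)
    (μ : FreeGroup α → ℝ)
    (hprob : IsProb μ) (hsymm : MeasSymm μ) (haper : IsAperiodic μ)
    (hgen : GeneratingSupport μ) (he : 0 < μ 1)
    (hswap : ∀ x : FreeGroup α, μ (FreeGroup.map (Equiv.swap a b) x) = μ x) :
    Amu μ = {1} := by
  ext c
  simp only [Set.mem_singleton_iff]
  constructor
  swap
  · rintro rfl
    refine tendsto_const_nhds.congr (fun n => ?_)
    rw [div_self (convPow_one_pos hprob he n).ne']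
  intro hcA
  by_contra hc
  obtain ⟨x, E, hE1, hE2⟩ := comb a b hab c hc
  obtain ⟨k, hk⟩ := convPow_exists_pos hprob hsymm hgen x
  have hη : 0 < convPow μ (k + k) x := by
    have := convPow_mul_le hprob k k x 1
    rw [mul_one] at this
    exact lt_of_lt_of_le (mul_pos hk (convPow_one_pos hprob he k)) this
  set η := convPow μ (k + k) x with hηdef
  -- choose N with 2 / N ≤ η ^ 2 / 32
  obtain ⟨N, hN⟩ := exists_nat_gt (64 / η ^ 2)
  have hN0 : (0 : ℝ) < N := lt_trans (by positivity) hN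
  have hN2 : 64 < η ^ 2 * N := by
    rw [div_lt_iff₀ (by positivity)] at hN; linarith
  set δ : ℝ := 1 / (N * 4 ^ N * 4) with hδ
  have hδ0 : 0 < δ := by positivity
  have hev : ∀ᶠ n in atTop, 1 - δ < convPow μ n c / convPow μ n 1 :=
    (show Tendsto (fun n => convPow μ n c / convPow μ n 1) atTop (𝓝 1) from hcA).eventually (lt_mem_nhds (by linarith))
  obtain ⟨M, hM⟩ := eventually_atTop.mp hev
  have hM' := hM ((M + k) + (M + k)) (by lia)
  set n := M + k with hn
  set P := convPow μ (n + n) 1 with hP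
  have hP0 : 0 < P := convPow_one_pos hprob he _
  rw [lt_div_iff₀ hP0] at hM'
  have hl := convPow_lower hprob hsymm k M x
  rw [← hn, ← hP, ← hηdef] at hl
  have hw := wandering hprob hsymm n c E hE1 N
  have hu := upper hprob hsymm n x E hE2 (4 / η) (by positivity)
  rw [← hP] at hw hu
  set S := ∑' g, E.indicator (fun g => convPow μ n g ^ 2) g
  have h1 : N * 4 ^ N * 4 * (P - convPow μ (n + n) c) ≤ P := by
    have : P - convPow μ (n + n) c ≤ δ * P := by linarith
    calc N * 4 ^ N * 4 * (P - convPow μ (n + n) c) ≤ N * 4 ^ N * 4 * (δ * P) := by gcongr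
      _ = P := by rw [hδ]; field_simp
  have h2 : N * S ≤ 3 * P := by linarith
  have h3 : η * P ≤ 4 / η * S + η / 4 * P := by
    have : (4 / η)⁻¹ = η / 4 := by rw [inv_div]
    rw [this] at hu; linarith
  have h4 : η ^ 2 * P ≤ 4 * S + η ^ 2 / 4 * P := by
    have := mul_le_mul_of_nonneg_left h3 hη.le
    have e : η * (4 / η * S + η / 4 * P) = 4 * S + η ^ 2 / 4 * P := by field_simp
    rw [e] at this; linarith
  have h5 : 3 * (η ^ 2 * N) * P ≤ 48 * P := by nlinarith
  nlinarith
end
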